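/- arXiv:2404.09152 — 2 statements merged into one kernel-verified Lean document; each statement's English description precedes it below -/
import Mathlib

section
/- Let a = (a_1,…,a_5) ∈ [0,1]^5 with a_1 + a_2 + a_3 + a_4 + a_5 = 4. Then f(a) ≤ 72/125, with equality if and only if a = (4/5, 4/5, 4/5, 4/5, 4/5). -/
noncomputable section

/-- The functional `f(x) = (1/256)·Σ_{i<j<k} [(xᵢ+xⱼ+xₖ)⁴ − (xᵢ+xⱼ)⁴ − (xᵢ+xₖ)⁴ − (xⱼ+xₖ)⁴
+ xᵢ⁴ + xⱼ⁴ + xₖ⁴]`. -/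
noncomputable def volDecF {N : ℕ} (x : Fin N → ℝ) : ℝ :=
  (1 / 256) * ∑ i : Fin N, ∑ j : Fin N, ∑ k : Fin N,
    if i < j ∧ j < k then
      (x i + x j + x k) ^ 4 - (x i + x j) ^ 4 - (x i + x k) ^ 4 - (x j + x k) ^ 4
        + x i ^ 4 + x j ^ 4 + x k ^ 4
    else 0

/-- Sum-of-squares certificate; only the fourth-power part is kept for the equality case. -/
theorem key_ineq (p q r s t : ℝ) (hp : 0 ≤ p) (hq : 0 ≤ q) (hr : 0 ≤ r) (hs : 0 ≤ s) (ht : 0 ≤ t) :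
    9/500 * ((p^2-q^2)^2 + (p^2-r^2)^2 + (p^2-s^2)^2 + (p^2-t^2)^2 + (q^2-r^2)^2 + 
      (q^2-s^2)^2 + (q^2-t^2)^2 + (r^2-s^2)^2 + (r^2-t^2)^2 + (s^2-t^2)^2)
      ≤ 9/125 * (p+q+r+s+t)^4 - ((p+q+r+s+t) * (p*q*r + p*q*s + p*q*t + p*r*s + p*r*t + 
      p*s*t + q*r*s + q*r*t + q*s*t + r*s*t) - (p*q*r*s + p*q*r*t + p*q*s*t + p*r*s*t + q*r*s*t)) := by
  have h1 : 0 ≤ p*q*(r-s)^2 + p*q*(r-t)^2 + p*q*(s-t)^2 + p*r*(q-s)^2 + p*r*(q-t)^2 + 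
      p*r*(s-t)^2 + p*s*(q-r)^2 + p*s*(q-t)^2 + p*s*(r-t)^2 + p*t*(q-r)^2 + 
      p*t*(q-s)^2 + p*t*(r-s)^2 + q*r*(p-s)^2 + q*r*(p-t)^2 + q*r*(s-t)^2 + 
      q*s*(p-r)^2 + q*s*(p-t)^2 + q*s*(r-t)^2 + q*t*(p-r)^2 + q*t*(p-s)^2 + 
      q*t*(r-s)^2 + r*s*(p-q)^2 + r*s*(p-t)^2 + r*s*(q-t)^2 + r*t*(p-q)^2 + 
      r*t*(p-s)^2 + r*t*(q-s)^2 + s*t*(p-q)^2 + s*t*(p-r)^2 + s*t*(q-r)^2 := by positivity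
  have h2 : 0 ≤ p^2*(q-r)^2 + p^2*(q-s)^2 + p^2*(q-t)^2 + p^2*(r-s)^2 + p^2*(r-t)^2 + 
      p^2*(s-t)^2 + q^2*(p-r)^2 + q^2*(p-s)^2 + q^2*(p-t)^2 + q^2*(r-s)^2 + 
      q^2*(r-t)^2 + q^2*(s-t)^2 + r^2*(p-q)^2 + r^2*(p-s)^2 + r^2*(p-t)^2 + 
      r^2*(q-s)^2 + r^2*(q-t)^2 + r^2*(s-t)^2 + s^2*(p-q)^2 + s^2*(p-r)^2 + 
      s^2*(p-t)^2 + s^2*(q-r)^2 + s^2*(q-t)^2 + s^2*(r-t)^2 + t^2*(p-q)^2 + 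
      t^2*(p-r)^2 + t^2*(p-s)^2 + t^2*(q-r)^2 + t^2*(q-s)^2 + t^2*(r-s)^2 := by positivity
  have h3 : 0 ≤ p*q*(p-q)^2 + p*r*(p-r)^2 + p*s*(p-s)^2 + p*t*(p-t)^2 + q*r*(q-r)^2 + 
      q*s*(q-s)^2 + q*t*(q-t)^2 + r*s*(r-s)^2 + r*t*(r-t)^2 + s*t*(s-t)^2 := by positivity
  linear_combination (159/1500) * h1 + (87/500) * h2 + (36/125) * h3

theorem volDecF_five (a : Fin 5 → ℝ) (p q r s t : ℝ) (h0 : a 0 = 1 - p) (h1 : a 1 = 1 - q)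
    (h2 : a 2 = 1 - r) (h3 : a 3 = 1 - s) (h4 : a 4 = 1 - t) (h : t = 1 - p - q - r - s) :
    volDecF a = 3/16 * (3 + ((p+q+r+s+t) * (p*q*r + p*q*s + p*q*t + p*r*s + p*r*t + 
      p*s*t + q*r*s + q*r*t + q*s*t + r*s*t) - (p*q*r*s + p*q*r*t + p*q*s*t + p*r*s*t + q*r*s*t))) := by
  unfold volDecF
  simp [Fin.sum_univ_five, h0, h1, h2, h3, h4]
  subst h
  ring

theorem statement17 (a : Fin 5 → ℝ) (ha : ∀ i, a i ∈ Set.Icc (0:ℝ) 1)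
    (hsum : ∑ i, a i = 4) :
    volDecF a ≤ 72 / 125 ∧
    (volDecF a = 72 / 125 ↔ a = fun _ => 4 / 5) := by
  have hn : ∀ i, 0 ≤ 1 - a i := fun i => sub_nonneg.2 (ha i).2
  rw [Fin.sum_univ_five] at hsum
  have k := key_ineq _ _ _ _ _ (hn 0) (hn 1) (hn 2) (hn 3) (hn 4)
  have e := volDecF_five a (1 - a 0) (1 - a 1) (1 - a 2) (1 - a 3) (1 - a 4)
    (by ring) (by ring) (by ring) (by ring) (by ring) (by linarith)
  have hE : (1 - a 0) + (1 - a 1) + (1 - a 2) + (1 - a 3) + (1 - a 4) = 1 := by linarith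
  rw [hE] at k e
  have hle : volDecF a ≤ 72 / 125 := by
    refine le_trans (le_of_eq e) ?_
    have := le_trans (by positivity) k
    linarith
  refine ⟨hle, fun h => ?_, fun h => ?_⟩
  · have z : ∀ x y : ℝ, 0 ≤ (x ^ 2 - y ^ 2) ^ 2 := fun x y => sq_nonneg _
    have eqs : ∀ i : Fin 5, a i = a 0 := by
      have fin : ∀ x y : ℝ, 0 ≤ 1 - x → 0 ≤ 1 - y →
          ((1 - x) ^ 2 - (1 - y) ^ 2) ^ 2 ≤ 0 → y = x := by
        intro x y hx hy hxy
        have h0 : (1 - x) ^ 2 - (1 - y) ^ 2 = 0 :=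
          pow_eq_zero_iff (two_ne_zero) |>.1 (le_antisymm hxy (sq_nonneg _))
        have := (pow_left_inj₀ hx hy two_ne_zero).1 (sub_eq_zero.1 h0)
        linarith
      have a01 := z (1 - a 0) (1 - a 1)
      have a02 := z (1 - a 0) (1 - a 2)
      have a03 := z (1 - a 0) (1 - a 3)
      have a04 := z (1 - a 0) (1 - a 4)
      have a12 := z (1 - a 1) (1 - a 2)
      have a13 := z (1 - a 1) (1 - a 3)
      have a14 := z (1 - a 1) (1 - a 4)
      have a23 := z (1 - a 2) (1 - a 3)
      have a24 := z (1 - a 2) (1 - a 4)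
      have a34 := z (1 - a 3) (1 - a 4)
      intro i
      fin_cases i
      · rfl
      · exact fin (a 0) (a 1) (hn 0) (hn 1) (by linarith)
      · exact fin (a 0) (a 2) (hn 0) (hn 2) (by linarith)
      · exact fin (a 0) (a 3) (hn 0) (hn 3) (by linarith)
      · exact fin (a 0) (a 4) (hn 0) (hn 4) (by linarith)
    funext i
    have := eqs 1
    have := eqs 2
    have := eqs 3
    have := eqs 4
    have := eqs i
    linarith
  · rw [e, h]
    norm_num

end
end

section
/- Let N ≥ 6 and let x ∈ (0,1]^N with Σ_{i=1}^N x_i = 4 (all coordinates strictly positive). Then x is not a maximum point of f on [0,1]^N ∩ {y : Σ y_i = 4}: there exists y ∈ [0,1]^N with Σ_{i=1}^N y_i = 4 and f(y) > f(x). -/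
noncomputable section

lemma pairs_sum : ∀ {N : ℕ} (x : Fin N → ℝ),
    ∑ j : Fin N, ∑ k : Fin N, (if j < k then x j * x k else 0)
      = ((∑ i, x i) ^ 2 - ∑ i, x i ^ 2) / 2 := by
  intro N
  induction N with
  | zero => intro x; simp
  | succ n ih =>
    intro x
    have h := ih (fun i => x i.succ)
    simp only [Fin.sum_univ_succ, Fin.succ_lt_succ_iff, Fin.succ_pos, Fin.not_lt_zero,
      if_true, if_false, lt_irrefl, zero_add, ← Finset.mul_sum] at h ⊢
    rw [h]
    ring

lemma pairs_sum' : ∀ {N : ℕ} (x : Fin N → ℝ),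
    ∑ j : Fin N, ∑ k : Fin N, (if j < k then x j * x k * (x j + x k) else 0)
      = (∑ i, x i) * (∑ i, x i ^ 2) - ∑ i, x i ^ 3 := by
  intro N
  induction N with
  | zero => intro x; simp
  | succ n ih =>
    intro x
    have h := ih (fun i => x i.succ)
    have e : ∑ i : Fin n, x 0 * x i.succ * (x 0 + x i.succ)
        = x 0 ^ 2 * ∑ i : Fin n, x i.succ + x 0 * ∑ i : Fin n, x i.succ ^ 2 := by
      rw [Finset.mul_sum, Finset.mul_sum, ← Finset.sum_add_distrib]
      exact Finset.sum_congr rfl fun i _ => by ring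
    simp only [Fin.sum_univ_succ, Fin.succ_lt_succ_iff, Fin.succ_pos, Fin.not_lt_zero,
      if_true, if_false, lt_irrefl, zero_add] at h ⊢
    rw [h, e]
    ring

lemma triples_sum : ∀ {N : ℕ} (x : Fin N → ℝ),
    ∑ i : Fin N, ∑ j : Fin N, ∑ k : Fin N, (if i < j ∧ j < k then
      (x i + x j + x k) ^ 4 - (x i + x j) ^ 4 - (x i + x k) ^ 4 - (x j + x k) ^ 4
        + x i ^ 4 + x j ^ 4 + x k ^ 4 else 0)
      = 6 * ((∑ i, x i) ^ 2 * (∑ i, x i ^ 2) - (∑ i, x i ^ 2) ^ 2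
          - 2 * (∑ i, x i) * (∑ i, x i ^ 3) + 2 * ∑ i, x i ^ 4) := by
  intro N
  induction N with
  | zero => intro x; simp
  | succ n ih =>
    intro x
    have h := ih (fun i => x i.succ)
    have h1 := pairs_sum (fun i : Fin n => x i.succ)
    have h2 := pairs_sum' (fun i : Fin n => x i.succ)
    have e : ∑ j : Fin n, ∑ k : Fin n, (if j < k then
      (x 0 + x j.succ + x k.succ) ^ 4 - (x 0 + x j.succ) ^ 4 - (x 0 + x k.succ) ^ 4
        - (x j.succ + x k.succ) ^ 4
        + x 0 ^ 4 + x j.succ ^ 4 + x k.succ ^ 4 else 0)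
        = 12 * x 0 ^ 2 * (∑ j : Fin n, ∑ k : Fin n, (if j < k then x j.succ * x k.succ else 0))
        + 12 * x 0 * (∑ j : Fin n, ∑ k : Fin n,
          (if j < k then x j.succ * x k.succ * (x j.succ + x k.succ) else 0)) := by
      simp only [Finset.mul_sum, ← Finset.sum_add_distrib]
      refine Finset.sum_congr rfl fun i _ => Finset.sum_congr rfl fun j _ => ?_
      split_ifs <;> ring
    simp only [Fin.sum_univ_succ, Fin.succ_lt_succ_iff, Fin.succ_pos, Fin.not_lt_zero,
      if_true, if_false, lt_irrefl, zero_add, true_and, and_true, false_and, and_false,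
      Finset.sum_const_zero] at h ⊢
    rw [h, e, h1, h2]
    ring

lemma volDecF_eq {N : ℕ} (x : Fin N → ℝ) (hs : ∑ i, x i = 4) :
    volDecF x = (6 / 256) * (16 * (∑ i, x i ^ 2) - (∑ i, x i ^ 2) ^ 2
          - 8 * (∑ i, x i ^ 3) + 2 * ∑ i, x i ^ 4) := by
  unfold volDecF
  rw [triples_sum, hs]
  ring

lemma sum_upd {N : ℕ} (x : Fin N → ℝ) {i j : Fin N} (hij : i ≠ j) (a b : ℝ) (φ : ℝ → ℝ) :
    ∑ k, φ (Function.update (Function.update x i a) j b k)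
      = (∑ k, φ (x k)) - φ (x i) - φ (x j) + φ a + φ b := by
  have key : ∀ z : Fin N → ℝ, ∑ k, φ (z k)
      = φ (z j) + (φ (z i) + ∑ k ∈ (Finset.univ.erase j).erase i, φ (z k)) := by
    intro z
    rw [Finset.add_sum_erase _ (fun k => φ (z k)) (by simp [hij]),
      Finset.add_sum_erase _ (fun k => φ (z k)) (by simp)]
  rw [key, key x]
  have e : ∑ k ∈ (Finset.univ.erase j).erase i,
      φ (Function.update (Function.update x i a) j b k)
      = ∑ k ∈ (Finset.univ.erase j).erase i, φ (x k) := by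
    refine Finset.sum_congr rfl fun k hk => ?_
    simp only [Finset.mem_erase] at hk
    rw [Function.update_of_ne hk.2.1, Function.update_of_ne hk.1]
  rw [e]
  simp only [Function.update_self, Function.update_of_ne hij]
  ring

theorem statement18 {N : ℕ} (hN : 6 ≤ N) (x : Fin N → ℝ)
    (hx : ∀ i, 0 < x i ∧ x i ≤ 1) (hsum : ∑ i, x i = 4) :
    ∃ y : Fin N → ℝ, (∀ i, y i ∈ Set.Icc (0:ℝ) 1) ∧ ∑ i, y i = 4 ∧ volDecF x < volDecF y := by
  by_contra hcon
  have hmax : ∀ y : Fin N → ℝ, (∀ i, y i ∈ Set.Icc (0:ℝ) 1) → ∑ i, y i = 4 →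
      volDecF y ≤ volDecF x := by
    intro y h1 h2
    by_contra h3
    exact hcon ⟨y, h1, h2, not_le.1 h3⟩
  -- the exchange inequality
  have hex : ∀ i j, i ≠ j → ∀ a b : ℝ, 0 ≤ a → a ≤ 1 → 0 ≤ b → b ≤ 1 → a + b = x i + x j →
      (a * b - x i * x j) * ((∑ k, x k ^ 2) - 8 + 6 * (x i + x j)
        - 2 * (x i ^ 2 + x i * x j + x j ^ 2)) ≤ 0 := by
    intro i j hij a b ha0 ha1 hb0 hb1 hab
    have s1 := sum_upd x hij a b (fun t => t)
    have s2 := sum_upd x hij a b (fun t => t ^ 2)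
    have s3 := sum_upd x hij a b (fun t => t ^ 3)
    have s4 := sum_upd x hij a b (fun t => t ^ 4)
    have hs : ∑ k, Function.update (Function.update x i a) j b k = 4 := by
      rw [s1, hsum]; linarith
    have := hmax (Function.update (Function.update x i a) j b) (by
      intro k
      by_cases hk : k = j
      · subst hk; simp [hb0, hb1]
      · rw [Function.update_of_ne hk]
        by_cases hk' : k = i
        · subst hk'; simp [ha0, ha1]
        · rw [Function.update_of_ne hk']; exact ⟨(hx k).1.le, (hx k).2⟩) hs
    rw [volDecF_eq _ hs, volDecF_eq _ hsum, s2, s3, s4] at this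
    have hb : b = x i + x j - a := by linarith
    subst hb
    generalize (∑ k, x k ^ 2) = p2 at *
    generalize (∑ k, x k ^ 3) = p3 at *
    generalize (∑ k, x k ^ 4) = p4 at *
    nlinarith [this]
  have hA : ∀ i j, i ≠ j → x i ≠ x j → (∑ k, x k ^ 2) - 8 + 6 * (x i + x j)
        - 2 * (x i ^ 2 + x i * x j + x j ^ 2) ≤ 0 := by
    intro i j hij hne
    have hi := hx i
    have hj := hx j
    have h := hex i j hij ((x i + x j) / 2) ((x i + x j) / 2) (by linarith) (by linarith)
      (by linarith) (by linarith) (by ring)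
    have hp : 0 < (x i + x j) / 2 * ((x i + x j) / 2) - x i * x j := by
      have := sq_pos_of_ne_zero (sub_ne_zero.2 hne)
      nlinarith
    by_contra hc
    exact absurd (mul_pos hp (not_le.1 hc)) (not_lt.2 h)
  have hB' : ∀ i j, i ≠ j → x j ≤ x i → x i < 1 → 0 ≤ (∑ k, x k ^ 2) - 8 + 6 * (x i + x j)
        - 2 * (x i ^ 2 + x i * x j + x j ^ 2) := by
    intro i j hij hle hlt
    have hi := hx i
    have hj := hx j
    obtain ⟨t, ht0, ht1, ht2⟩ : ∃ t : ℝ, 0 < t ∧ t ≤ x j ∧ t ≤ 1 - x i :=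
      ⟨min (x j) (1 - x i), lt_min hj.1 (by linarith), min_le_left _ _, min_le_right _ _⟩
    have h := hex i j hij (x i + t) (x j - t) (by linarith) (by linarith)
      (by linarith) (by linarith) (by ring)
    have hp : (x i + t) * (x j - t) - x i * x j < 0 := by
      nlinarith [mul_pos ht0 ht0, mul_nonneg ht0.le (sub_nonneg.2 hle)]
    by_contra hc
    exact absurd (mul_pos_of_neg_of_neg hp (not_le.1 hc)) (not_lt.2 h)
  have hB : ∀ i j, i ≠ j → x i < 1 → x j < 1 → 0 ≤ (∑ k, x k ^ 2) - 8 + 6 * (x i + x j)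
        - 2 * (x i ^ 2 + x i * x j + x j ^ 2) := by
    intro i j hij h1 h2
    rcases le_total (x j) (x i) with h | h
    · exact hB' i j hij h h1
    · have := hB' j i hij.symm h h2
      nlinarith [this]
  have hL : ∀ i j k, i ≠ j → k ≠ j → x k < x i → x i ≠ x j → x j < 1 → False := by
    intro i j k hij hkj hki hne hj
    have h1 := hA i j hij hne
    have h2 := hB k j hkj (lt_of_lt_of_le hki (hx i).2) hj
    have := mul_pos (sub_pos.2 hki)
      (show 0 < 3 - x i - x j - x k by linarith [(hx i).2])
    nlinarith
  haveI : Nonempty (Fin N) := ⟨⟨0, by omega⟩⟩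
  obtain ⟨i, hi⟩ := Finite.exists_max x
  obtain ⟨k, hki, hk⟩ : ∃ k, k ≠ i ∧ ∀ j, j ≠ k → x j = x i := by
    by_cases h : ∃ k, x k < x i
    · obtain ⟨k, hk⟩ := h
      refine ⟨k, fun e => by simp [e] at hk, fun j hj => ?_⟩
      by_contra hne
      have hlt : x j < x i := lt_of_le_of_ne (hi j) hne
      exact hL i j k (fun e => hne (by rw [e])) hj.symm hk (Ne.symm hne)
        (lt_of_lt_of_le hlt (hx i).2)
    · push Not at h
      haveI : Nontrivial (Fin N) := Fin.nontrivial_iff_two_le.2 (by omega)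
      obtain ⟨k, hk⟩ := exists_ne i
      exact ⟨k, hk, fun j _ => le_antisymm (hi j) (h j)⟩
  have hsumφ : ∀ φ : ℝ → ℝ, ∑ j, φ (x j) = φ (x k) + ((N : ℝ) - 1) * φ (x i) := by
    intro φ
    rw [← Finset.add_sum_erase _ (fun j => φ (x j)) (Finset.mem_univ k),
      Finset.sum_congr rfl (g := fun _ => φ (x i))
        (fun j hj => by rw [hk j (Finset.ne_of_mem_erase hj)])]
    rw [Finset.sum_const, Finset.card_erase_of_mem (Finset.mem_univ k), nsmul_eq_mul,
      Finset.card_univ, Fintype.card_fin, Nat.cast_sub (by omega)]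
    simp
  have e1 := hsumφ (fun t => t)
  have e2 := hsumφ (fun t => t ^ 2)
  rw [hsum] at e1
  have hNr : (6 : ℝ) ≤ N := by exact_mod_cast hN
  have ha := hx i
  have hb := hx k
  have hba := hi k
  have ha1 : x i < 1 := by nlinarith
  have hC := hB' i k hki.symm hba ha1
  rw [e2] at hC
  have hbe : x k = 4 - ((N : ℝ) - 1) * x i := by linarith
  have hfac : 0 ≤ (((N : ℝ) - 2) * x i) * (2 - ((N : ℝ) - 3) * x i) := by
    rw [hbe] at hC
    nlinarith [hC]
  have h3 : 0 ≤ 2 - ((N : ℝ) - 3) * x i :=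
    nonneg_of_mul_nonneg_right hfac (mul_pos (by linarith) ha.1)
  have h4 : (N : ℝ) * x i ≥ 4 := by linarith
  have hN6 : (N : ℝ) ≤ 6 := by
    by_contra hc
    nlinarith [mul_pos (sub_pos.2 (not_le.1 hc)) ha.1]
  have hN6' : N = 6 := le_antisymm (by exact_mod_cast hN6) hN
  subst hN6'
  norm_num at h3 h4 hbe
  have hia : x i = 2 / 3 := by linarith
  have hka : x k = 2 / 3 := by linarith
  have hall : x = fun _ => 2 / 3 := by
    funext j
    by_cases hj : j = k
    · rw [hj, hka]
    · rw [hk j hj, hia]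
  have hs4 : ∑ j, (![1, 1, 1, 1, 0, 0] : Fin 6 → ℝ) j = 4 := by
    simp [Fin.sum_univ_succ]; norm_num
  have hfin := hmax ![1, 1, 1, 1, 0, 0] (by intro j; fin_cases j <;> simp) hs4
  rw [volDecF_eq _ hs4, volDecF_eq _ hsum, hall] at hfin
  simp [Fin.sum_univ_succ] at hfin
  norm_num at hfin

end
end
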